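/- Let H be a bipartite simple graph with finitely many edges such that every support vertex of H has degree at least 3. If a graph H' can be obtained from H by a finite sequence of operations (I), (II), (III), (I'), (II'), (III'), then H' can be obtained from H by a finite sequence using only the operations (I), (II), (III). -/

import Mathlib

open SimpleGraph

/-- Operation (I): add a pendant edge joining a support vertex `v` of `H`
to an isolated vertex `w` of `H`. -/
def OpI (H H' : SimpleGraph ℕ) : Prop :=
  ∃ v w : ℕ, v ∈ H.support ∧ w ∉ H.support ∧ H' = H ⊔ edge v w

/-- Operation (II): subdivide an edge `uv` of `H` using two distinct isolated
vertices `p, q` of `H`, i.e. delete `uv` and add the edges `up`, `pq`, `qv`. -/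
def OpII (H H' : SimpleGraph ℕ) : Prop :=
  ∃ u v p q : ℕ, H.Adj u v ∧ p ∉ H.support ∧ q ∉ H.support ∧ p ≠ q ∧
    H' = H.deleteEdges {s(u, v)} ⊔ edge u p ⊔ edge p q ⊔ edge q v

/-- Operation (III): for vertices `x, y` of `H` that are non-adjacent and have a
common neighbor `z`, add a new isolated vertex `w` of `H` together with the
edges `xw` and `wy`. -/
def OpIII (H H' : SimpleGraph ℕ) : Prop :=
  ∃ x y z w : ℕ, x ≠ y ∧ ¬ H.Adj x y ∧ H.Adj x z ∧ H.Adj y z ∧ w ∉ H.support ∧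
    H' = H ⊔ edge x w ⊔ edge w y

/-- One of the forward operations (I), (II), (III). -/
def OpFwd (H H' : SimpleGraph ℕ) : Prop := OpI H H' ∨ OpII H H' ∨ OpIII H H'

/-- One of the six operations (I), (II), (III), (I'), (II'), (III'):
the inverse operations are those whose inverse is a forward operation. -/
def OpAny (H H' : SimpleGraph ℕ) : Prop := OpFwd H H' ∨ OpFwd H' H

/-!
Undoing (I) or (III) deletes a vertex of degree at most two whose neighbors are all adjacent to one
further vertex, and undoing (II) replaces a path with two inner vertices of degree two by an edge.
These reductions shrink the support and are locally confluent up to a relabelling of vertices of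
degree at most two. The graph `H` is irreducible, and all vertices of its support have degree at
least three, so every such relabelling fixes `H`. As in Newman's lemma, every graph connected to `H`
by reductions and their inverses therefore reduces to `H`. Along such a reduction all graphs are
bipartite, hence triangle-free, which makes each step the inverse of one of (I), (II), (III).
-/

section Reduction

variable {V W : Type*}

/-- The branch vertices of `G`: those of degree at least three, possibly infinite. -/
def branchSet (G : SimpleGraph V) : Set V := {v | 2 < (G.neighborSet v).encard}

/-- The vertex `w` folds onto `z`: it has degree one or two, and `z` is another vertex adjacent to
all neighbors of `w`. Deleting `w` then undoes operation (I) or (III), up to the requirement in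
(III) that the two neighbors of `w` be non-adjacent. -/
structure IsFold (G : SimpleGraph V) (w z : V) : Prop where
  mem_support : w ∈ G.support
  notMem_branchSet : w ∉ branchSet G
  ne : z ≠ w
  adj : ∀ a, G.Adj w a → G.Adj z a

/-- The vertices `p` and `q` have degree two and are the inner vertices of a path `u p q v`.
The ends `u` and `v` are distinct, but they may be adjacent. -/
structure IsThread (G : SimpleGraph V) (u p q v : V) : Prop where
  adj_left : ∀ a, G.Adj p a ↔ a = u ∨ a = q
  adj_right : ∀ a, G.Adj q a ↔ a = p ∨ a = v
  ends_ne : u ≠ v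
  ne_right : u ≠ q
  left_ne : p ≠ v

/-- The graph in which the path `u p q v` is replaced by the edge `uv`, undoing operation (II). -/
def smoothThread (G : SimpleGraph V) (u p q v : V) : SimpleGraph V :=
  (G.deleteIncidenceSet p).deleteIncidenceSet q ⊔ edge u v

/-- One step of undoing (I), (II) or (III). The non-adjacency required by (III) is dropped; in a
triangle-free graph it is automatic. -/
inductive Reduces (G : SimpleGraph V) : SimpleGraph V → Prop
  | fold {w z : V} (h : IsFold G w z) : Reduces G (G.deleteIncidenceSet w)
  | smooth {u p q v : V} (h : IsThread G u p q v) (huv : ¬ G.Adj u v) :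
      Reduces G (smoothThread G u p q v)

/-- `G₁` and `G₂` have reducts that agree up to a relabelling of the vertices which fixes `S`
pointwise. -/
def JoinableFixing (S : Set V) (G₁ G₂ : SimpleGraph V) : Prop :=
  ∃ σ ∈ fixingSubgroup (Equiv.Perm V) S, ∃ K,
    Relation.ReflTransGen Reduces G₁ K ∧ Relation.ReflTransGen Reduces G₂ (K.comap σ)

variable {G G' G₁ G₂ H K : SimpleGraph V} {u p q v u' p' q' v' w z w' z' : V}

theorem smoothThread_adj {a b : V} : (smoothThread G u p q v).Adj a b ↔
    (G.Adj a b ∧ (a ≠ p ∧ b ≠ p) ∧ a ≠ q ∧ b ≠ q) ∨ (a = u ∧ b = v ∨ a = v ∧ b = u) ∧ a ≠ b := by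
  simp only [smoothThread, sup_adj, deleteIncidenceSet_adj, edge_adj, and_assoc]

theorem smoothThread_comm (G : SimpleGraph V) (u p q v : V) :
    smoothThread G v q p u = smoothThread G u p q v := by
  ext a b
  simp only [smoothThread_adj]
  tauto

theorem notMem_branchSet_of_adj {x y : V} (h : ∀ a, G.Adj w a → a = x ∨ a = y) :
    w ∉ branchSet G := by
  have hle : (G.neighborSet w).encard ≤ 2 :=
    calc (G.neighborSet w).encard ≤ ({x, y} : Set V).encard := Set.encard_le_encard h
      _ ≤ ({y} : Set V).encard + 1 := Set.encard_insert_le _ _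
      _ = 2 := by rw [Set.encard_singleton, one_add_one_eq_two]
  exact not_lt.mpr hle

theorem neighborSet_eq_pair_of_notMem_branchSet (hw : w ∈ G.support) (hwb : w ∉ branchSet G) :
    ∃ x y, G.neighborSet w = {x, y} := by
  obtain ⟨x, hx⟩ := hw
  have hle : (G.neighborSet w).encard ≤ 2 := not_lt.mp hwb
  rw [← Set.encard_sdiff_singleton_add_one (show x ∈ G.neighborSet w from hx),
    ← one_add_one_eq_two, ENat.add_le_add_iff_right ENat.one_ne_top,
    Set.encard_le_one_iff_eq] at hle
  rw [← Set.insert_eq_of_mem (show x ∈ G.neighborSet w from hx), ← Set.insert_sdiff_singleton]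
  rcases hle with hle | ⟨y, hle⟩
  · exact ⟨x, x, by rw [hle]; simp⟩
  · exact ⟨x, y, by rw [hle]⟩

theorem branchSet_mono : Monotone (branchSet : SimpleGraph V → Set V) := fun _ _ h _ hv =>
  hv.trans_le (Set.encard_le_encard fun _ ha => h ha)

theorem notMem_support_deleteIncidenceSet (G : SimpleGraph V) (w : V) :
    w ∉ (G.deleteIncidenceSet w).support := by
  rintro ⟨a, ha⟩
  exact (deleteIncidenceSet_adj.mp ha).2.1 rfl

theorem isFold_deleteIncidenceSet {a : V} (hb : w' ∉ branchSet G) (ha : G.Adj w' a) (haw : a ≠ w)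
    (hw : w' ≠ w) (hz : z' ≠ w) (hne : z' ≠ w') (hadj : ∀ b ≠ w, G.Adj w' b → G.Adj z' b) :
    IsFold (G.deleteIncidenceSet w) w' z' where
  mem_support := (deleteIncidenceSet_adj.mpr ⟨ha, hw, haw⟩).mem_support_left
  notMem_branchSet h := hb (branchSet_mono (deleteIncidenceSet_le _ _) h)
  ne := hne
  adj b h := by
    rw [deleteIncidenceSet_adj] at h ⊢
    exact ⟨hadj b h.2.2 h.1, hz, h.2.2⟩

namespace IsThread

theorem symm (h : IsThread G u p q v) : IsThread G v q p u where
  adj_left a := (h.adj_right a).trans or_comm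
  adj_right a := (h.adj_left a).trans or_comm
  ends_ne := h.ends_ne.symm
  ne_right := h.left_ne.symm
  left_ne := h.ne_right.symm

theorem adj_fst (h : IsThread G u p q v) : G.Adj u p := ((h.adj_left u).mpr (.inl rfl)).symm

theorem adj_mid (h : IsThread G u p q v) : G.Adj p q := (h.adj_left q).mpr (.inr rfl)

theorem adj_lst (h : IsThread G u p q v) : G.Adj q v := (h.adj_right v).mpr (.inr rfl)

theorem left_notMem_branchSet (h : IsThread G u p q v) : p ∉ branchSet G :=
  notMem_branchSet_of_adj fun a => (h.adj_left a).mp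

theorem right_notMem_branchSet (h : IsThread G u p q v) : q ∉ branchSet G :=
  h.symm.left_notMem_branchSet

theorem left_notMem_support_smoothThread (h : IsThread G u p q v) :
    p ∉ (smoothThread G u p q v).support := by
  rintro ⟨a, ha⟩
  grind [smoothThread_adj.mp ha, h.adj_fst.ne, h.left_ne]

theorem right_notMem_support_smoothThread (h : IsThread G u p q v) :
    q ∉ (smoothThread G u p q v).support :=
  smoothThread_comm G u p q v ▸ h.symm.left_notMem_support_smoothThread

-- If `u` and `v` are adjacent, `p` folds onto `v`, after which `q` is pendant at `v` and folds
-- onto `u`.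
theorem reflTransGen_smoothThread (h : IsThread G u p q v) :
    Relation.ReflTransGen Reduces G (smoothThread G u p q v) := by
  by_cases huv : G.Adj u v
  · have hup := h.adj_fst
    have hpq := h.adj_mid
    have hqv := h.adj_lst
    have hp : IsFold G p v :=
      ⟨hup.mem_support_right, h.left_notMem_branchSet, h.left_ne.symm,
        by grind [h.adj_left, adj_comm]⟩
    have hq : IsFold (G.deleteIncidenceSet p) q u :=
      isFold_deleteIncidenceSet h.right_notMem_branchSet hqv h.left_ne.symm hpq.ne' hup.ne
        h.ne_right (by grind [h.adj_right])
    have heq : smoothThread G u p q v = (G.deleteIncidenceSet p).deleteIncidenceSet q := by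
      refine sup_eq_left.mpr ((edge_le_iff _).mpr (.inr ?_))
      simp only [deleteIncidenceSet_adj]
      exact ⟨⟨huv, hup.ne, h.left_ne.symm⟩, h.ne_right, hqv.ne'⟩
    rw [heq]
    exact (Relation.ReflTransGen.single (.fold hp)).tail (.fold hq)
  · exact .single (.smooth h huv)

theorem deleteIncidenceSet (h : IsThread G u p q v) (hu : w ≠ u) (hp : w ≠ p) (hq : w ≠ q)
    (hv : w ≠ v) : IsThread (G.deleteIncidenceSet w) u p q v := by
  refine ⟨fun a => ?_, fun a => ?_, h.ends_ne, h.ne_right, h.left_ne⟩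
  · rw [deleteIncidenceSet_adj, h.adj_left]
    grind
  · rw [deleteIncidenceSet_adj, h.adj_right]
    grind

end IsThread

theorem branchSet_smoothThread_subset (h : IsThread G u p q v) :
    branchSet (smoothThread G u p q v) ⊆ branchSet G := by
  have encard_le {x y r : V} {s : Set V} (hr : G.Adj x r)
      (hs : s ⊆ insert y (G.neighborSet x \ {r})) : s.encard ≤ (G.neighborSet x).encard :=
    (Set.encard_le_encard hs).trans <| (Set.encard_insert_le _ _).trans_eq <|
      Set.encard_sdiff_singleton_add_one hr
  intro t ht
  refine lt_of_lt_of_le (b := ((smoothThread G u p q v).neighborSet t).encard) ht ?_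
  rcases eq_or_ne t u with rfl | htu
  · refine encard_le (y := v) h.adj_fst fun a ha => ?_
    simp only [mem_neighborSet, smoothThread_adj] at ha
    simp only [Set.mem_insert_iff, Set.mem_sdiff, mem_neighborSet, Set.mem_singleton_iff]
    grind
  rcases eq_or_ne t v with rfl | htv
  · refine encard_le (y := u) h.adj_lst.symm fun a ha => ?_
    simp only [mem_neighborSet, smoothThread_adj] at ha
    simp only [Set.mem_insert_iff, Set.mem_sdiff, mem_neighborSet, Set.mem_singleton_iff]
    grind
  · refine Set.encard_le_encard fun a ha => ?_
    simp only [mem_neighborSet, smoothThread_adj] at ha ⊢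
    grind

theorem branchSet_comap (G : SimpleGraph W) (e : V ≃ W) :
    branchSet (G.comap e) = e ⁻¹' branchSet G := by
  ext v
  have : (G.comap e).neighborSet v = e ⁻¹' G.neighborSet (e v) := rfl
  simp only [branchSet, Set.mem_ofPred_eq, Set.mem_preimage, this]
  rw [← e.image_symm_eq_preimage, e.symm.injective.encard_image]

theorem IsFold.comap {G : SimpleGraph W} {e : V ≃ W} (h : IsFold G (e w) (e z)) :
    IsFold (G.comap e) w z where
  mem_support := by
    obtain ⟨a, ha⟩ := h.mem_support
    exact ⟨e.symm a, by simpa using ha⟩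
  notMem_branchSet := by simpa [branchSet_comap] using h.notMem_branchSet
  ne := ne_of_apply_ne e h.ne
  adj a := h.adj (e a)

theorem IsThread.comap {G : SimpleGraph W} {e : V ≃ W} (h : IsThread G (e u) (e p) (e q) (e v)) :
    IsThread (G.comap e) u p q v where
  adj_left a := by simpa using h.adj_left (e a)
  adj_right a := by simpa using h.adj_right (e a)
  ends_ne := ne_of_apply_ne e h.ends_ne
  ne_right := ne_of_apply_ne e h.ne_right
  left_ne := ne_of_apply_ne e h.left_ne

namespace Reduces

theorem comap {G G' : SimpleGraph W} (h : Reduces G G') (e : V ≃ W) :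
    Reduces (G.comap e) (G'.comap e) := by
  cases h with
  | @fold w z h =>
    obtain ⟨w, rfl⟩ := e.surjective w
    obtain ⟨z, rfl⟩ := e.surjective z
    convert fold h.comap
    ext a b
    simp [deleteIncidenceSet_adj]
  | @smooth u p q v h huv =>
    obtain ⟨u, rfl⟩ := e.surjective u
    obtain ⟨p, rfl⟩ := e.surjective p
    obtain ⟨q, rfl⟩ := e.surjective q
    obtain ⟨v, rfl⟩ := e.surjective v
    convert smooth h.comap huv
    ext a b
    simp [smoothThread_adj]

theorem branchSet_subset (h : Reduces G G') : branchSet G' ⊆ branchSet G := by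
  cases h with
  | fold h => exact branchSet_mono (deleteIncidenceSet_le _ _)
  | smooth h huv => exact branchSet_smoothThread_subset h

theorem support_ssubset (h : Reduces G G') : G'.support ⊂ G.support := by
  cases h with
  | @fold w z h =>
    exact (Set.ssubset_iff_of_subset (support_mono (deleteIncidenceSet_le _ _))).mpr
      ⟨w, h.mem_support, notMem_support_deleteIncidenceSet G w⟩
  | @smooth u p q v h huv =>
    refine (Set.ssubset_iff_of_subset ?_).mpr
      ⟨p, h.adj_mid.mem_support_left, h.left_notMem_support_smoothThread⟩
    rintro a ⟨b, hab⟩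
    rcases smoothThread_adj.mp hab with hab | ⟨⟨rfl, rfl⟩ | ⟨rfl, rfl⟩, -⟩
    exacts [hab.1.mem_support_left, h.adj_fst.mem_support_left, h.adj_lst.mem_support_right]

theorem finite_support_sdiff (h : Reduces G G') : (G.support \ G'.support).Finite := by
  cases h with
  | @fold w z h =>
    refine (Set.finite_singleton w).subset fun a ⟨⟨b, hab⟩, ha⟩ => ?_
    by_contra haw
    by_cases hbw : b = w
    · subst hbw
      exact ha ⟨z, deleteIncidenceSet_adj.mpr ⟨(h.adj a hab.symm).symm, haw, h.ne⟩⟩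
    · exact ha ⟨b, deleteIncidenceSet_adj.mpr ⟨hab, haw, hbw⟩⟩
  | @smooth u p q v h huv =>
    refine (Set.toFinite {p, q}).subset fun a ⟨⟨b, hab⟩, ha⟩ => ?_
    have hisol : ∀ c, ¬ (smoothThread G u p q v).Adj a c := fun c hac => ha hac.mem_support_left
    simp only [smoothThread_adj] at hisol
    grind [h.adj_left, h.adj_right, h.ends_ne, adj_comm, hisol u, hisol v]

theorem colorable_two (h : Reduces G G') (hG' : G'.Colorable 2) : G.Colorable 2 := by
  classical
  obtain ⟨c⟩ := hG'
  cases h with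
  | @fold w z h =>
    refine ⟨Coloring.mk (fun a => if a = w then c z else c a) fun {a b} hab => ?_⟩
    have hc : ∀ x y, _ → c x ≠ c y := fun _ _ => c.valid
    simp only [deleteIncidenceSet_adj] at hc
    grind [h.adj, h.ne, adj_comm]
  | @smooth u p q v h huv =>
    refine ⟨Coloring.mk (fun a => if a = p then c v else if a = q then c u else c a)
      fun {a b} hab => ?_⟩
    have hc : ∀ x y, _ → c x ≠ c y := fun _ _ => c.valid
    simp only [smoothThread_adj] at hc
    grind [h.adj_left, h.adj_right, h.ends_ne, adj_comm, hab.ne]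

theorem not_of_support_subset_branchSet (hH : H.support ⊆ branchSet H) : ¬ Reduces H G := by
  intro h
  cases h with
  | fold h => exact h.notMem_branchSet (hH h.mem_support)
  | smooth h huv => exact h.left_notMem_branchSet (hH h.adj_mid.mem_support_left)

end Reduces

theorem reflTransGen_reduces_comap {G G' : SimpleGraph W}
    (h : Relation.ReflTransGen Reduces G G') (e : V ≃ W) :
    Relation.ReflTransGen Reduces (G.comap e) (G'.comap e) :=
  h.lift (SimpleGraph.comap e) fun _ _ hr => hr.comap e

theorem branchSet_subset_of_reflTransGen (h : Relation.ReflTransGen Reduces G G') :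
    branchSet G' ⊆ branchSet G := by
  induction h with
  | refl => exact subset_rfl
  | tail _ h ih => exact h.branchSet_subset.trans ih

theorem support_subset_of_reflTransGen (h : Relation.ReflTransGen Reduces G G') :
    G'.support ⊆ G.support := by
  induction h with
  | refl => exact subset_rfl
  | tail _ h ih => exact h.support_ssubset.subset.trans ih

theorem finite_support_sdiff_of_reflTransGen (h : Relation.ReflTransGen Reduces G G') :
    (G.support \ G'.support).Finite := by
  induction h with
  | refl => simp
  | tail _ h ih =>
    exact (ih.union h.finite_support_sdiff).subset (sdiff_triangle _ _ _)

theorem colorable_two_of_reflTransGen (h : Relation.ReflTransGen Reduces G G')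
    (hG' : G'.Colorable 2) : G.Colorable 2 := by
  induction h with
  | refl => exact hG'
  | tail _ h ih => exact ih (h.colorable_two hG')

theorem comap_eq_of_mem_fixingSubgroup {σ : Equiv.Perm V}
    (hσ : σ ∈ fixingSubgroup (Equiv.Perm V) G.support) : G.comap σ = G := by
  have hfix : ∀ a ∈ G.support, σ a = a := (mem_fixingSubgroup_iff _).mp hσ
  have hfix' : ∀ a, σ a ∈ G.support → σ a = a := fun a ha => σ.injective (hfix _ ha)
  ext a b
  refine ⟨fun hab => ?_, fun hab => ?_⟩
  · have hab : G.Adj (σ a) (σ b) := hab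
    rwa [hfix' a hab.mem_support_left, hfix' b hab.mem_support_right] at hab
  · rwa [comap_adj, hfix a hab.mem_support_left, hfix b hab.mem_support_right]

theorem swap_mem_fixingSubgroup [DecidableEq V] {S : Set V} {a b : V} (ha : a ∉ S) (hb : b ∉ S) :
    Equiv.swap a b ∈ fixingSubgroup (Equiv.Perm V) S :=
  (mem_fixingSubgroup_iff _).mpr fun _ hs =>
    Equiv.swap_apply_of_ne_of_ne (ne_of_mem_of_not_mem hs ha) (ne_of_mem_of_not_mem hs hb)

namespace JoinableFixing

variable {S : Set V}

theorem of_reflTransGen (h₁ : Relation.ReflTransGen Reduces G₁ K)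
    (h₂ : Relation.ReflTransGen Reduces G₂ K) : JoinableFixing S G₁ G₂ :=
  ⟨1, one_mem _, K, h₁, h₂⟩

theorem of_comap {σ : Equiv.Perm V} (hσ : σ ∈ fixingSubgroup (Equiv.Perm V) S)
    (h : Relation.ReflTransGen Reduces G K) : JoinableFixing S G (K.comap σ) :=
  ⟨σ, hσ, K, h, .refl⟩

theorem symm (h : JoinableFixing S G₁ G₂) : JoinableFixing S G₂ G₁ := by
  obtain ⟨σ, hσ, K, h₁, h₂⟩ := h
  refine ⟨σ⁻¹, inv_mem hσ, K.comap σ, h₂, ?_⟩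
  convert h₁
  ext a b
  simp

end JoinableFixing

namespace IsFold

theorem reduces_deleteIncidenceSet (h : IsFold G w z) (h' : IsFold G w' z') (hne : w' ≠ w)
    (hz : z' ≠ w ∨ z ≠ w') :
    Reduces (G.deleteIncidenceSet w) ((G.deleteIncidenceSet w).deleteIncidenceSet w') := by
  by_cases hww' : G.Adj w w'
  · exact .fold (isFold_deleteIncidenceSet h'.notMem_branchSet (h.adj w' hww').symm h.ne hne
      (h'.adj w hww'.symm).ne h'.ne fun b _ => h'.adj b)
  · obtain ⟨a, ha⟩ := h'.mem_support
    have haw : a ≠ w := by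
      rintro rfl
      exact hww' ha.symm
    by_cases hz' : z' = w
    · subst hz'
      exact .fold (isFold_deleteIncidenceSet h'.notMem_branchSet ha haw hne h.ne
        (hz.resolve_left (not_not_intro rfl)) fun b _ hb => h.adj b (h'.adj b hb))
    · exact .fold (isFold_deleteIncidenceSet h'.notMem_branchSet ha haw hne hz' h'.ne
        fun b _ => h'.adj b)

theorem deleteIncidenceSet_eq_comap_swap [DecidableEq V] (h : IsFold G w w') (h' : IsFold G w' w) :
    G.deleteIncidenceSet w' = (G.deleteIncidenceSet w).comap (Equiv.swap w w') := by
  ext a b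
  simp only [comap_adj, deleteIncidenceSet_adj, Equiv.swap_apply_def]
  grind [h.adj, h'.adj, adj_comm]

-- If `w` and `w'` fold onto each other they are twins: deleting one may make the other
-- irreducible, and the two results differ by exchanging them.
theorem joinableFixing_fold (h : IsFold G w z) (h' : IsFold G w' z') :
    JoinableFixing (branchSet G) (G.deleteIncidenceSet w) (G.deleteIncidenceSet w') := by
  classical
  rcases eq_or_ne w' w with rfl | hne
  · exact .of_reflTransGen .refl .refl
  by_cases hz : z' ≠ w ∨ z ≠ w'
  · refine .of_reflTransGen (.single (h.reduces_deleteIncidenceSet h' hne hz)) (.single ?_)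
    convert h'.reduces_deleteIncidenceSet h hne.symm hz.symm using 1
    ext a b
    simp only [deleteIncidenceSet_adj]
    tauto
  · push Not at hz
    obtain ⟨rfl, rfl⟩ := hz
    rw [h.deleteIncidenceSet_eq_comap_swap h']
    exact .of_comap (swap_mem_fixingSubgroup h.notMem_branchSet h'.notMem_branchSet) .refl

theorem ne_left_of_isThread (h : IsFold G w z) (ht : IsThread G u p q v) (huv : ¬ G.Adj u v) :
    w ≠ p := by
  rintro rfl
  have hzu : G.Adj z u := h.adj u ht.adj_fst.symm
  have hzq : G.Adj z q := h.adj q ht.adj_mid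
  rcases (ht.adj_right z).mp hzq.symm with rfl | rfl
  exacts [h.ne rfl, huv hzu.symm]

-- Here `u` is pendant at `p`. Once it is deleted, `p` is pendant at `q` and can be deleted as well,
-- after which `q` plays the role of `u` in the smoothed graph.
theorem joinableFixing_smoothThread_of_end (h : IsFold G u z) (ht : IsThread G u p q v)
    (huv : ¬ G.Adj u v) :
    JoinableFixing (branchSet G) (G.deleteIncidenceSet u) (smoothThread G u p q v) := by
  classical
  have hzp : G.Adj p z := (h.adj p ht.adj_fst).symm
  obtain rfl : z = q := ((ht.adj_left z).mp hzp).resolve_left h.ne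
  have hu : ∀ a, G.Adj u a ↔ a = p := by
    refine fun a => ⟨fun ha => ((ht.adj_right a).mp (h.adj a ha)).resolve_right ?_, ?_⟩
    · rintro rfl
      exact huv ha
    · rintro rfl
      exact ht.adj_fst
  have hp : IsFold (G.deleteIncidenceSet u) p v :=
    isFold_deleteIncidenceSet ht.left_notMem_branchSet ht.adj_mid h.ne ht.adj_fst.ne'
      ht.ends_ne.symm ht.left_ne.symm (by grind [ht.adj_left, ht.adj_lst.symm])
  have heq : smoothThread G u p z v =
      ((G.deleteIncidenceSet u).deleteIncidenceSet p).comap (Equiv.swap u z) := by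
    ext a b
    simp only [smoothThread_adj, comap_adj, deleteIncidenceSet_adj, Equiv.swap_apply_def]
    grind [ht.adj_right, ht.adj_lst.ne, hzp.ne, adj_comm]
  rw [heq]
  exact .of_comap (swap_mem_fixingSubgroup h.notMem_branchSet ht.right_notMem_branchSet)
    (.single (.fold hp))

theorem exists_isFold_smoothThread (h : IsFold G w z) (ht : IsThread G u p q v) (hu : w ≠ u)
    (hp : w ≠ p) (hq : w ≠ q) (hv : w ≠ v) : ∃ z', IsFold (smoothThread G u p q v) w z' := by
  have hwp : ¬ G.Adj w p := fun hwp => by grind [(ht.adj_left w).mp hwp.symm]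
  have hwq : ¬ G.Adj w q := fun hwq => by grind [(ht.adj_right w).mp hwq.symm]
  have hsupp : w ∈ (smoothThread G u p q v).support := by
    obtain ⟨a, ha⟩ := h.mem_support
    exact Adj.mem_support_left (smoothThread_adj.mpr (.inl ⟨ha, by grind⟩))
  have hb : w ∉ branchSet (smoothThread G u p q v) := fun hb =>
    h.notMem_branchSet (branchSet_smoothThread_subset ht hb)
  suffices ∃ z' ≠ w, ∀ a, (smoothThread G u p q v).Adj w a → (smoothThread G u p q v).Adj z' a by
    obtain ⟨z', hne, hadj⟩ := this
    exact ⟨z', hsupp, hb, hne, hadj⟩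
  simp only [smoothThread_adj]
  rcases eq_or_ne z p with rfl | hzp
  · have hwu : ∀ a, G.Adj w a → a = u ∨ a = q := fun a ha => (ht.adj_left a).mp (h.adj a ha)
    exact ⟨v, hv.symm, by grind [ht.ends_ne]⟩
  rcases eq_or_ne z q with rfl | hzq
  · have hwv : ∀ a, G.Adj w a → a = p ∨ a = v := fun a ha => (ht.adj_right a).mp (h.adj a ha)
    exact ⟨u, hu.symm, by grind [ht.ends_ne]⟩
  · exact ⟨z, h.ne, by grind [h.adj]⟩

theorem joinableFixing_smoothThread (h : IsFold G w z) (ht : IsThread G u p q v)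
    (huv : ¬ G.Adj u v) :
    JoinableFixing (branchSet G) (G.deleteIncidenceSet w) (smoothThread G u p q v) := by
  have hvu : ¬ G.Adj v u := fun hvu => huv hvu.symm
  have hp : w ≠ p := h.ne_left_of_isThread ht huv
  have hq : w ≠ q := h.ne_left_of_isThread ht.symm hvu
  rcases eq_or_ne w u with rfl | hu
  · exact h.joinableFixing_smoothThread_of_end ht huv
  rcases eq_or_ne w v with rfl | hv
  · rw [← smoothThread_comm]
    exact h.joinableFixing_smoothThread_of_end ht.symm hvu
  obtain ⟨z', h'⟩ := h.exists_isFold_smoothThread ht hu hp hq hv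
  refine .of_reflTransGen (ht.deleteIncidenceSet hu hp hq hv).reflTransGen_smoothThread
    (.single ?_)
  convert Reduces.fold h' using 1
  ext a b
  simp only [smoothThread_adj, deleteIncidenceSet_adj]
  grind

end IsFold

namespace IsThread

theorem eq_ends (h : IsThread G u p q v) (h' : IsThread G u' p q v') : u' = u ∧ v' = v :=
  ⟨((h.adj_left u').mp h'.adj_fst.symm).resolve_right h'.ne_right,
    ((h.adj_right v').mp h'.adj_lst).resolve_left h'.left_ne.symm⟩

theorem smoothThread_eq_comap_swap [DecidableEq V] (h : IsThread G u p q v)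
    (h' : IsThread G p q v v') :
    smoothThread G p q v v' = (smoothThread G u p q v).comap (Equiv.swap p v) := by
  ext a b
  simp only [smoothThread_adj, comap_adj, Equiv.swap_apply_def]
  grind [h.adj_left, h'.adj_right, h.ne_right, h'.left_ne, h.adj_fst.ne, h.adj_mid.ne,
    h.adj_lst.ne, h'.adj_lst.ne, adj_comm]

theorem joinableFixing_of_shared (h : IsThread G u p q v)
    (h' : IsThread G u' q q' v') :
    JoinableFixing (branchSet G) (smoothThread G u p q v) (smoothThread G u' q q' v') := by
  classical
  rcases (h.adj_right q').mp h'.adj_mid with rfl | rfl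
  · obtain ⟨rfl, rfl⟩ := h.symm.eq_ends h'
    rw [smoothThread_comm]
    exact .of_reflTransGen .refl .refl
  · obtain rfl : u' = p := ((h.adj_right u').mp h'.adj_fst.symm).resolve_right h'.ne_right
    rw [h.smoothThread_eq_comap_swap h']
    exact .of_comap
      (swap_mem_fixingSubgroup h.left_notMem_branchSet h'.right_notMem_branchSet) .refl

-- On the path `v' q' p' p q v`, both smoothings are compared with the one of `q' p' p q`.
theorem joinableFixing_of_consecutive (h : IsThread G p' p q v)
    (h' : IsThread G p p' q' v') :
    JoinableFixing (branchSet G) (smoothThread G p' p q v) (smoothThread G p p' q' v') := by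
  classical
  have hmid : IsThread G q p p' q' := by
    refine ⟨fun a => (h.adj_left a).trans or_comm, h'.adj_left, ?_, h.ne_right.symm, h'.ne_right⟩
    rintro rfl
    rcases (h.adj_right p').mp h'.adj_mid.symm with rfl | rfl
    exacts [h.adj_fst.ne rfl, h.ends_ne rfl]
  rw [hmid.smoothThread_eq_comap_swap h', h.symm.smoothThread_eq_comap_swap hmid,
    smoothThread_comm, comap_comap, ← Equiv.Perm.coe_mul]
  exact .of_comap (mul_mem
    (swap_mem_fixingSubgroup h.right_notMem_branchSet h'.left_notMem_branchSet)
    (swap_mem_fixingSubgroup h.left_notMem_branchSet h'.right_notMem_branchSet)) .refl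

theorem joinableFixing_of_eq_or_adj (h : IsThread G u p q v)
    (h' : IsThread G u' p' q' v') (hpp' : p = p' ∨ G.Adj p p') :
    JoinableFixing (branchSet G) (smoothThread G u p q v) (smoothThread G u' p' q' v') := by
  rcases hpp' with rfl | hpp'
  · rw [← smoothThread_comm]
    exact h.symm.joinableFixing_of_shared h'
  rcases (h.adj_left p').mp hpp' with rfl | rfl
  · rcases (h'.adj_left p).mp hpp'.symm with rfl | rfl
    · exact h.joinableFixing_of_consecutive h'
    · rw [← smoothThread_comm G p', ← smoothThread_comm G u']
      exact h.symm.joinableFixing_of_shared h'.symm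
  · exact h.joinableFixing_of_shared h'

theorem smoothThread_of_separated (h : IsThread G u p q v) (h' : IsThread G u' p' q' v')
    (hsep : ∀ a ∈ ({p, q} : Set V), ∀ b ∈ ({p', q'} : Set V), a ≠ b ∧ ¬ G.Adj a b) :
    IsThread (smoothThread G u p q v) u' p' q' v' := by
  simp only [Set.mem_insert_iff, Set.mem_singleton_iff, forall_eq_or_imp, forall_eq] at hsep
  refine ⟨fun a => ?_, fun a => ?_, h'.ends_ne, h'.ne_right, h'.left_ne⟩ <;>
  · rw [smoothThread_adj]
    grind [h.adj_left, h.adj_right, h'.adj_left, h'.adj_right, adj_comm]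

theorem joinableFixing_of_separated (h : IsThread G u p q v) (h' : IsThread G u' p' q' v')
    (hsep : ∀ a ∈ ({p, q} : Set V), ∀ b ∈ ({p', q'} : Set V), a ≠ b ∧ ¬ G.Adj a b) :
    JoinableFixing (branchSet G) (smoothThread G u p q v) (smoothThread G u' p' q' v') := by
  have hcomm : smoothThread (smoothThread G u p q v) u' p' q' v' =
      smoothThread (smoothThread G u' p' q' v') u p q v := by
    simp only [Set.mem_insert_iff, Set.mem_singleton_iff, forall_eq_or_imp, forall_eq] at hsep
    ext a b
    simp only [smoothThread_adj]
    grind [h.adj_left, h.adj_right, h'.adj_left, h'.adj_right, adj_comm]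
  have hsep' : ∀ a ∈ ({p', q'} : Set V), ∀ b ∈ ({p, q} : Set V), a ≠ b ∧ ¬ G.Adj a b :=
    fun a ha b hb => ⟨(hsep b hb a ha).1.symm, fun hab => (hsep b hb a ha).2 hab.symm⟩
  refine .of_reflTransGen (h.smoothThread_of_separated h' hsep).reflTransGen_smoothThread ?_
  rw [hcomm]
  exact (h'.smoothThread_of_separated h hsep').reflTransGen_smoothThread

theorem joinableFixing_smoothThread (h : IsThread G u p q v)
    (h' : IsThread G u' p' q' v') :
    JoinableFixing (branchSet G) (smoothThread G u p q v) (smoothThread G u' p' q' v') := by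
  by_cases hpp' : p = p' ∨ G.Adj p p'
  · exact h.joinableFixing_of_eq_or_adj h' hpp'
  by_cases hpq' : p = q' ∨ G.Adj p q'
  · rw [← smoothThread_comm G u']
    exact h.joinableFixing_of_eq_or_adj h'.symm hpq'
  by_cases hqp' : q = p' ∨ G.Adj q p'
  · rw [← smoothThread_comm G u]
    exact h.symm.joinableFixing_of_eq_or_adj h' hqp'
  by_cases hqq' : q = q' ∨ G.Adj q q'
  · rw [← smoothThread_comm G u, ← smoothThread_comm G u']
    exact h.symm.joinableFixing_of_eq_or_adj h'.symm hqq'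
  refine h.joinableFixing_of_separated h' ?_
  simp only [not_or] at hpp' hpq' hqp' hqq'
  simp only [Set.mem_insert_iff, Set.mem_singleton_iff, forall_eq_or_imp, forall_eq]
  exact ⟨⟨hpp', hpq'⟩, hqp', hqq'⟩

end IsThread

theorem Reduces.joinableFixing (h₁ : Reduces G G₁) (h₂ : Reduces G G₂) :
    JoinableFixing (branchSet G) G₁ G₂ := by
  cases h₁ with
  | fold h₁ =>
    cases h₂ with
    | fold h₂ => exact h₁.joinableFixing_fold h₂
    | smooth h₂ h₂_ends => exact h₁.joinableFixing_smoothThread h₂ h₂_ends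
  | smooth h₁ h₁_ends =>
    cases h₂ with
    | fold h₂ => exact (h₂.joinableFixing_smoothThread h₁ h₁_ends).symm
    | smooth h₂ => exact h₁.joinableFixing_smoothThread h₂

-- This is Newman's lemma with target `H`: the relabelling returned by local confluence fixes `H`
-- because the support of `H` consists of branch vertices.
theorem Reduces.reflTransGen_of_reflTransGen (hH : H.support ⊆ branchSet H)
    (hGH : Relation.ReflTransGen Reduces G H) (hGG' : Reduces G G') :
    Relation.ReflTransGen Reduces G' H := by
  induction hn : (G.support \ H.support).ncard using Nat.strong_induction_on
    generalizing G G' with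
  | _ n ih =>
  subst hn
  rcases hGH.cases_head with rfl | ⟨G₁, hGG₁, hG₁H⟩
  · exact absurd hGG' (not_of_support_subset_branchSet hH)
  have hreducts (K : SimpleGraph V) (hG₁K : Relation.ReflTransGen Reduces G₁ K) :
      Relation.ReflTransGen Reduces K H := by
    induction hG₁K with
    | refl => exact hG₁H
    | @tail G₂ K hG₁G₂ hG₂K hG₂H =>
      have hssub : G₂.support \ H.support ⊂ G.support \ H.support := sdiff_lt_sdiff_right
        ((support_subset_of_reflTransGen hG₁G₂).trans_ssubset hGG₁.support_ssubset)
        (support_subset_of_reflTransGen hG₂H)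
      have hlt := Set.ncard_lt_ncard hssub (finite_support_sdiff_of_reflTransGen hGH)
      exact ih _ hlt hG₂H hG₂K rfl
  obtain ⟨σ, hσ, K, hG₁K, hG'K⟩ := hGG₁.joinableFixing hGG'
  have hσH : H.comap σ = H := comap_eq_of_mem_fixingSubgroup <|
    fixingSubgroup_antitone _ _ (hH.trans (branchSet_subset_of_reflTransGen hGH)) hσ
  exact hσH ▸ hG'K.trans (reflTransGen_reduces_comap (hreducts K hG₁K) σ)

theorem reflTransGen_reduces_of_symmGen (hH : H.support ⊆ branchSet H)
    (h : Relation.ReflTransGen (Relation.SymmGen Reduces) H G) :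
    Relation.ReflTransGen Reduces G H := by
  induction h with
  | refl => exact .refl
  | tail _ h ih =>
    rcases h with h | h
    · exact h.reflTransGen_of_reflTransGen hH ih
    · exact .head h ih

theorem reduces_of_sup_edge_sup_edge {x y : V} (hxz : G.Adj x z) (hyz : G.Adj y z)
    (hw : w ∉ G.support) : Reduces (G ⊔ edge x w ⊔ edge w y) G := by
  have hisol : ∀ a, ¬ G.Adj w a := fun a ha => hw ha.mem_support_left
  have hxw : x ≠ w := by grind
  have hzw : z ≠ w := by grind [adj_comm]
  have hadj : ∀ a, (G ⊔ edge x w ⊔ edge w y).Adj w a → a = x ∨ a = y := by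
    simp only [sup_adj, edge_adj]
    grind
  have hfold : IsFold (G ⊔ edge x w ⊔ edge w y) w z := by
    refine ⟨Adj.mem_support_left (v := x) ?_, notMem_branchSet_of_adj hadj, hzw, fun a ha => ?_⟩
    · simp only [sup_adj, edge_adj]
      grind
    · rcases hadj a ha with rfl | rfl
      exacts [.inl (.inl hxz.symm), .inl (.inl hyz.symm)]
  convert Reduces.fold hfold
  ext a b
  simp only [deleteIncidenceSet_adj, sup_adj, edge_adj]
  grind [adj_comm]

theorem reduces_of_subdivide (huv : G.Adj u v) (hp : p ∉ G.support) (hq : q ∉ G.support)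
    (hpq : p ≠ q) : Reduces (G.deleteEdges {s(u, v)} ⊔ edge u p ⊔ edge p q ⊔ edge q v) G := by
  have hpisol : ∀ a, ¬ G.Adj p a := fun a ha => hp ha.mem_support_left
  have hqisol : ∀ a, ¬ G.Adj q a := fun a ha => hq ha.mem_support_left
  have hthread : IsThread (G.deleteEdges {s(u, v)} ⊔ edge u p ⊔ edge p q ⊔ edge q v) u p q v := by
    refine ⟨fun a => ?_, fun a => ?_, huv.ne, by grind, by grind [adj_comm]⟩ <;>
    · simp only [sup_adj, edge_adj, deleteEdges_adj, Set.mem_singleton_iff, Sym2.eq_iff]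
      grind [adj_comm]
  convert Reduces.smooth hthread ?_ using 1
  · ext a b
    have hne : G.Adj a b → a ≠ b := Adj.ne
    simp only [smoothThread_adj, sup_adj, edge_adj, deleteEdges_adj, Set.mem_singleton_iff,
      Sym2.eq_iff]
    grind [adj_comm]
  · simp only [sup_adj, edge_adj, deleteEdges_adj, Set.mem_singleton_iff]
    grind [adj_comm]

theorem deleteIncidenceSet_sup_edge_sup_edge {x y : V} (h : G.neighborSet w = {x, y}) :
    G.deleteIncidenceSet w ⊔ edge x w ⊔ edge w y = G := by
  have hadj : ∀ a, G.Adj w a ↔ a = x ∨ a = y := fun a => Set.ext_iff.mp h a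
  ext a b
  have hne : G.Adj a b → a ≠ b := Adj.ne
  simp only [sup_adj, deleteIncidenceSet_adj, edge_adj]
  grind [adj_comm]

theorem IsThread.subdivide_smoothThread (h : IsThread G u p q v) (huv : ¬ G.Adj u v) :
    (smoothThread G u p q v).deleteEdges {s(u, v)} ⊔ edge u p ⊔ edge p q ⊔ edge q v = G := by
  ext a b
  have hne : G.Adj a b → a ≠ b := Adj.ne
  simp only [sup_adj, smoothThread_adj, deleteEdges_adj, edge_adj, Set.mem_singleton_iff,
    Sym2.eq_iff]
  grind [h.adj_left, h.adj_right, adj_comm]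

end Reduction

theorem reduces_of_opFwd {G G' : SimpleGraph ℕ} (h : OpFwd G' G) : Reduces G G' := by
  rcases h with ⟨v, w, ⟨z, hvz⟩, hw, rfl⟩ | ⟨u, v, p, q, huv, hp, hq, hpq, rfl⟩ |
    ⟨x, y, z, w, -, -, hxz, hyz, hw, rfl⟩
  · simpa only [edge_comm w v, sup_assoc, sup_idem] using reduces_of_sup_edge_sup_edge hvz hvz hw
  · exact reduces_of_subdivide huv hp hq hpq
  · exact reduces_of_sup_edge_sup_edge hxz hyz hw

theorem IsFold.opFwd {G : SimpleGraph ℕ} {w z : ℕ} (h : IsFold G w z)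
    (hfree : (G.deleteIncidenceSet w).CliqueFree 3) : OpFwd (G.deleteIncidenceSet w) G := by
  obtain ⟨x, y, hxy⟩ := neighborSet_eq_pair_of_notMem_branchSet h.mem_support h.notMem_branchSet
  have hw : w ∉ (G.deleteIncidenceSet w).support := notMem_support_deleteIncidenceSet G w
  have hadj : ∀ a, a = x ∨ a = y → (G.deleteIncidenceSet w).Adj a z := fun a ha => by
    have hwa : G.Adj w a := (Set.ext_iff.mp hxy a).mpr ha
    exact deleteIncidenceSet_adj.mpr ⟨(h.adj a hwa).symm, hwa.ne', h.ne⟩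
  have hxz := hadj x (.inl rfl)
  have hyz := hadj y (.inr rfl)
  have heq := (deleteIncidenceSet_sup_edge_sup_edge hxy).symm
  rcases eq_or_ne x y with rfl | hne
  · rw [edge_comm w x, sup_assoc, sup_idem] at heq
    exact .inl ⟨x, w, hxz.mem_support_left, hw, heq⟩
  · have hxy' : ¬ (G.deleteIncidenceSet w).Adj x y := fun hxy' =>
      hfree {x, y, z} (is3Clique_triple_iff.mpr ⟨hxy', hxz, hyz⟩)
    exact .inr (.inr ⟨x, y, z, w, hne, hxy', hxz, hyz, hw, heq⟩)

theorem IsThread.opFwd {G : SimpleGraph ℕ} {u p q v : ℕ} (h : IsThread G u p q v)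
    (huv : ¬ G.Adj u v) : OpFwd (smoothThread G u p q v) G := by
  have hadj : (smoothThread G u p q v).Adj u v :=
    smoothThread_adj.mpr (.inr ⟨.inl ⟨rfl, rfl⟩, h.ends_ne⟩)
  exact .inr (.inl ⟨u, v, p, q, hadj, h.left_notMem_support_smoothThread,
    h.right_notMem_support_smoothThread, h.adj_mid.ne, (h.subdivide_smoothThread huv).symm⟩)

theorem opFwd_of_reduces {G G' : SimpleGraph ℕ} (h : Reduces G G') (hfree : G'.CliqueFree 3) :
    OpFwd G' G := by
  cases h with
  | fold h => exact h.opFwd hfree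
  | smooth h huv => exact h.opFwd huv

theorem reflTransGen_opFwd_of_reduces {G H : SimpleGraph ℕ} (hbip : H.Colorable 2)
    (h : Relation.ReflTransGen Reduces G H) : Relation.ReflTransGen OpFwd H G := by
  induction h using Relation.ReflTransGen.head_induction_on with
  | refl => exact .refl
  | head hred hH ih =>
    exact ih.tail (opFwd_of_reduces hred
      ((colorable_two_of_reflTransGen hH hbip).cliqueFree (by norm_num)))

theorem stmt_0_general (H H' : SimpleGraph ℕ) (hbip : H.Colorable 2)
    (hdeg : ∀ v ∈ H.support, 3 ≤ (H.neighborSet v).encard)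
    (h : Relation.ReflTransGen OpAny H H') : Relation.ReflTransGen OpFwd H H' := by
  have hbranch : H.support ⊆ branchSet H := fun v hv =>
    (show (2 : ℕ∞) < 3 by norm_num).trans_le (hdeg v hv)
  have hsymm : Relation.ReflTransGen (Relation.SymmGen Reduces) H H' :=
    Relation.ReflTransGen.mono (fun _ _ hop => hop.symm.imp reduces_of_opFwd reduces_of_opFwd) _ _ h
  exact reflTransGen_opFwd_of_reduces hbip (reflTransGen_reduces_of_symmGen hbranch hsymm)

/-- If `H` is bipartite with finitely many edges and every support vertex of `H`
has degree at least `3`, then any graph obtained from `H` by a finite sequence of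
operations (I), (II), (III), (I'), (II'), (III') can be obtained from `H` by a
finite sequence of operations (I), (II), (III) only. -/
theorem stmt_0 (H H' : SimpleGraph ℕ) (hfin : H.edgeSet.Finite)
    (hbip : H.Colorable 2)
    (hdeg : ∀ v ∈ H.support, 3 ≤ (H.neighborSet v).ncard)
    (h : Relation.ReflTransGen OpAny H H') :
    Relation.ReflTransGen OpFwd H H' := by
  exact stmt_0_general H H' hbip
    (fun v hv => (Nat.cast_le.mpr (hdeg v hv)).trans (Set.ncard_le_encard _)) h
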